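/- Let q be a power of an odd prime and let n be an odd positive integer. If h_q(n) = 0, then h_q(2n) = 0. -/

import Mathlib

noncomputable section

/-- The cyclic shift operator on `Fin n → F`, sending `(a_0, …, a_{n-1})`
to `(a_{n-1}, a_0, …, a_{n-2})`. -/
def cshift (F : Type*) [Field F] (n : ℕ) : (Fin n → F) →ₗ[F] (Fin n → F) where
  toFun a := a ∘ (finRotate n).symm
  map_add' _ _ := rfl
  map_smul' _ _ := rfl

/-- A subspace `U ⊆ F^n` is cyclically covering if the union of its cyclic shifts is `F^n`. -/
def IsCyclicallyCovering {F : Type*} [Field F] {n : ℕ} (U : Submodule F (Fin n → F)) : Prop :=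
  ⋃ i ∈ Finset.range n, ⇑(cshift F n ^ i) '' (U : Set (Fin n → F)) = Set.univ

/-- `hcc F n` is the largest possible codimension of a cyclically covering subspace of `F^n`. -/
def hcc (F : Type*) [Field F] (n : ℕ) : ℕ :=
  sSup {k : ℕ | ∃ U : Submodule F (Fin n → F),
    IsCyclicallyCovering U ∧ n - Module.finrank F U = k}

/-!
Let `ζ` be a primitive `m`-th root of unity in `F`, where `m` and `n` are coprime. The `n`-th power
of the cyclic shift of `F ^ (m * n)` satisfies `X ^ m = 1`, so `F ^ (m * n)` is the sum of its
eigenspaces, and the one for the eigenvalue `ζ ^ (-k * n)` is the image of `F ^ n` under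
`a ↦ (ζ ^ (k * i) * a (i mod n))_i`. This embedding commutes with the cyclic shifts up to a nonzero
scalar, which a subspace does not see; hence a cyclically covering subspace `U` of `F ^ (m * n)`
pulls back along each of these `m` embeddings to a cyclically covering subspace of `F ^ n`, and the
codimension of `U` is at most the sum of the `m` resulting codimensions. The case `m = 2`, `ζ = -1`
is the passage from `n` to `2 * n`.
-/

section LinearAlgebra

theorem map_pow_apply_of_map_apply_eq_smul {R V W : Type*} [CommSemiring R] [AddCommMonoid V]
    [AddCommMonoid W] [Module R V] [Module R W] {σ : Module.End R V} {τ : Module.End R W}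
    {E : V →ₗ[R] W} {s : R} (hE : ∀ a, E (σ a) = s • τ (E a)) (i : ℕ) (a : V) :
    E ((σ ^ i) a) = s ^ i • (τ ^ i) (E a) := by
  induction i with
  | zero => simp
  | succ i ih =>
    rw [pow_succ', Module.End.mul_apply, hE, ih, map_smul, smul_smul, ← pow_succ', pow_succ' τ,
      Module.End.mul_apply]

open Submodule

variable {K W ι : Type*} {V : ι → Type*} [DivisionRing K] [AddCommGroup W] [Module K W]
  [Fintype ι] [∀ i, AddCommGroup (V i)] [∀ i, Module K (V i)] [∀ i, FiniteDimensional K (V i)]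

theorem finrank_quotient_le_sum_finrank_quotient_comap (E : ∀ i, V i →ₗ[K] W)
    (hE : ⨆ i, (E i).range = ⊤) (U : Submodule K W) :
    Module.finrank K (W ⧸ U) ≤ ∑ i, Module.finrank K (V i ⧸ U.comap (E i)) := by
  classical
  let S : (∀ i, V i ⧸ U.comap (E i)) →ₗ[K] W ⧸ U :=
    LinearMap.lsum K _ ℕ fun i => (U.comap (E i)).mapQ U (E i) le_rfl
  have range_le : ⨆ i, (E i).range ≤ S.range.comap U.mkQ := by
    refine iSup_le fun i => ?_
    rintro _ ⟨v, rfl⟩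
    exact ⟨Pi.single i ((U.comap (E i)).mkQ v), LinearMap.lsum_piSingle ..⟩
  have hS : Function.Surjective S := fun w => by
    obtain ⟨w, rfl⟩ := U.mkQ_surjective w
    exact range_le (hE ▸ mem_top)
  exact (LinearMap.finrank_le_finrank_of_surjective hS).trans_eq (Module.finrank_pi_fintype K)

end LinearAlgebra

section RootsOfUnity

variable {F : Type*} [Field F]

theorem isPrimitiveRoot_neg_one_of_odd_card [Fintype F]
    (hodd : Odd (Fintype.card F)) : IsPrimitiveRoot (-1 : F) 2 := by
  refine IsPrimitiveRoot.neg_one (ringChar F) fun h => ?_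
  exact Nat.not_even_iff_odd.2 hodd (Nat.even_iff.2 (FiniteField.even_card_of_char_two h))

theorem sum_pow_div_pow_of_isPrimitiveRoot {m : ℕ} [NeZero m] {ζ : F}
    (hζ : IsPrimitiveRoot ζ m) (i j : ℕ) :
    ∑ k ∈ Finset.range m, (ζ ^ i / ζ ^ j) ^ k = if i ≡ j [MOD m] then (m : F) else 0 := by
  have hζ0 : ζ ^ j ≠ 0 := pow_ne_zero j (hζ.ne_zero (NeZero.ne m))
  have div_eq_one : ζ ^ i / ζ ^ j = 1 ↔ i ≡ j [MOD m] := by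
    rw [div_eq_one_iff_eq hζ0, (hζ.isOfFinOrder (NeZero.ne m)).pow_eq_pow_iff_modEq,
      ← hζ.eq_orderOf]
  split_ifs with hij
  · simp [div_eq_one.2 hij]
  · have hpow : (ζ ^ i / ζ ^ j) ^ m = 1 := by
      rw [div_pow, pow_right_comm, pow_right_comm ζ j, hζ.pow_eq_one, one_pow, one_pow, div_one]
    rw [geom_sum_eq (mt div_eq_one.1 hij), hpow, sub_self, zero_div]

end RootsOfUnity

section Shift

variable {F : Type*} [Field F] {n N : ℕ}

theorem cshift_apply [NeZero n] (a : Fin n → F) (j : Fin n) : cshift F n a j = a (j - 1) :=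
  congrArg a (finRotate_symm_apply j)

theorem cshift_pow_apply [NeZero n] (k : ℕ) (a : Fin n → F) (j : Fin n) :
    (cshift F n ^ k) a j = a (j - k • 1) := by
  induction k generalizing j with
  | zero => simp
  | succ k ih => rw [pow_succ', Module.End.mul_apply, cshift_apply, ih, sub_sub, succ_nsmul']

theorem cshift_pow_self [NeZero n] : cshift F n ^ n = 1 := by
  have nsmul_one : n • (1 : Fin n) = 0 := by
    simpa only [Nat.card_eq_fintype_card, Fintype.card_fin]
      using card_nsmul_eq_zero' (x := (1 : Fin n))
  refine LinearMap.ext fun a => funext fun j => ?_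
  rw [cshift_pow_apply, nsmul_one, sub_zero, Module.End.one_apply]

theorem cshift_pow_sub_one_mul_apply_cshift_pow [NeZero n] (i : ℕ) (a : Fin n → F) :
    (cshift F n ^ ((n - 1) * i)) ((cshift F n ^ i) a) = a := by
  rw [← Module.End.mul_apply, ← pow_add, ← Nat.succ_mul, Nat.succ_eq_add_one,
    Nat.sub_add_cancel NeZero.one_le, pow_mul, cshift_pow_self, one_pow, Module.End.one_apply]

theorem isCyclicallyCovering_iff [NeZero n] {U : Submodule F (Fin n → F)} :
    IsCyclicallyCovering U ↔ ∀ a, ∃ i, (cshift F n ^ i) a ∈ U := by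
  simp only [IsCyclicallyCovering, Set.eq_univ_iff_forall, Set.mem_iUnion, Finset.mem_range,
    exists_prop, Set.mem_image, SetLike.mem_coe]
  refine forall_congr' fun a => ⟨?_, ?_⟩
  · rintro ⟨i, -, u, hu, rfl⟩
    exact ⟨(n - 1) * i, (cshift_pow_sub_one_mul_apply_cshift_pow i u).symm ▸ hu⟩
  · rintro ⟨i, hi⟩
    refine ⟨(n - 1) * i % n, Nat.mod_lt _ (NeZero.pos n), _, hi, ?_⟩
    rw [← pow_eq_pow_mod _ cshift_pow_self, cshift_pow_sub_one_mul_apply_cshift_pow]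

theorem IsCyclicallyCovering.comap [NeZero n] [NeZero N] {U : Submodule F (Fin N → F)}
    (hU : IsCyclicallyCovering U) {E : (Fin n → F) →ₗ[F] (Fin N → F)} {s : F}
    (hE : ∀ a, E (cshift F n a) = s • cshift F N (E a)) :
    IsCyclicallyCovering (U.comap E) := by
  refine isCyclicallyCovering_iff.2 fun a => ?_
  obtain ⟨i, hi⟩ := isCyclicallyCovering_iff.1 hU (E a)
  refine ⟨i, ?_⟩
  rw [Submodule.mem_comap, map_pow_apply_of_map_apply_eq_smul hE]
  exact U.smul_mem (s ^ i) hi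

theorem sub_finrank_eq_finrank_quotient (U : Submodule F (Fin n → F)) :
    n - Module.finrank F U = Module.finrank F ((Fin n → F) ⧸ U) := by
  rw [U.finrank_quotient, Module.finrank_fin_fun]

theorem IsCyclicallyCovering.finrank_quotient_le_hcc {U : Submodule F (Fin n → F)}
    (hU : IsCyclicallyCovering U) : Module.finrank F ((Fin n → F) ⧸ U) ≤ hcc F n := by
  refine le_csSup ⟨n, ?_⟩ ⟨U, hU, sub_finrank_eq_finrank_quotient U⟩
  rintro _ ⟨V, -, rfl⟩
  exact Nat.sub_le _ _

theorem hcc_le {d : ℕ} (h : ∀ U : Submodule F (Fin n → F), IsCyclicallyCovering U →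
    Module.finrank F ((Fin n → F) ⧸ U) ≤ d) : hcc F n ≤ d := by
  refine csSup_le' ?_
  rintro _ ⟨U, hU, rfl⟩
  exact (sub_finrank_eq_finrank_quotient U).trans_le (h U hU)

end Shift

section Twist

variable {F : Type*} [Field F] {m n : ℕ}

/-- The `s`-twisted periodic extension `(s ^ i * a (i mod n))_i` of `a : Fin n → F`. If
`s ^ (m * n) = 1`, its image is an eigenspace of `cshift F (m * n) ^ n`, on which the cyclic shift
acts as that of `F ^ n` up to the scalar `s⁻¹`. -/
def twist (m n : ℕ) (s : F) : (Fin n → F) →ₗ[F] (Fin (m * n) → F) where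
  toFun a i := s ^ (i : ℕ) * a i.modNat
  map_add' _ _ := funext fun _ => mul_add _ _ _
  map_smul' _ _ := funext fun _ => mul_left_comm _ _ _

theorem twist_apply (s : F) (a : Fin n → F) (i : Fin (m * n)) :
    twist m n s a i = s ^ (i : ℕ) * a i.modNat := rfl

theorem modNat_add_one [NeZero m] [NeZero n] (i : Fin (m * n)) :
    (i + 1).modNat = i.modNat + 1 := by
  ext
  simp [Fin.val_add]

theorem twist_cshift [NeZero m] [NeZero n] {s : F} (hs : s ^ (m * n) = 1) (a : Fin n → F) :
    twist m n s (cshift F n a) = s • cshift F (m * n) (twist m n s a) := by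
  refine funext fun j => ?_
  obtain ⟨i, rfl⟩ : ∃ i, i + 1 = j := ⟨j - 1, sub_add_cancel j 1⟩
  have pow_val : s ^ ((i + 1 : Fin (m * n)) : ℕ) = s * s ^ (i : ℕ) := by
    rw [Fin.val_add, Fin.val_one', Nat.add_mod_mod, ← pow_eq_pow_mod _ hs, pow_succ']
  rw [Pi.smul_apply, smul_eq_mul, twist_apply, cshift_apply, cshift_apply, add_sub_cancel_right,
    twist_apply, modNat_add_one, add_sub_cancel_right, pow_val, mul_assoc]

theorem sum_inv_pow_smul_twist_single [NeZero m] {ζ : F} (hζ : IsPrimitiveRoot ζ m)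
    (hmn : m.Coprime n) (j : Fin (m * n)) :
    ∑ k : Fin m, ((ζ ^ (k : ℕ)) ^ (j : ℕ))⁻¹ • twist m n (ζ ^ (k : ℕ)) (Pi.single j.modNat 1) =
      Pi.single j (m : F) := by
  funext i
  have eq_iff : i = j ↔ i.modNat = j.modNat ∧ (i : ℕ) ≡ j [MOD m] := by
    rw [Fin.ext_iff, Fin.ext_iff]
    change _ ↔ (i : ℕ) ≡ j [MOD n] ∧ (i : ℕ) ≡ j [MOD m]
    rw [and_comm, Nat.modEq_and_modEq_iff_modEq_mul hmn]
    exact ⟨fun h => h ▸ rfl, fun h => h.eq_of_lt_of_lt i.2 j.2⟩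
  calc
    _ = (∑ k ∈ Finset.range m, (ζ ^ (i : ℕ) / ζ ^ (j : ℕ)) ^ k) *
        (Pi.single j.modNat 1 : Fin n → F) i.modNat := by
      rw [← Fin.sum_univ_eq_sum_range, Finset.sum_apply, Finset.sum_mul]
      refine Finset.sum_congr rfl fun k _ => ?_
      rw [Pi.smul_apply, smul_eq_mul, twist_apply, ← mul_assoc, div_pow, pow_right_comm ζ k,
        pow_right_comm ζ k, div_eq_inv_mul]
    _ = (Pi.single j (m : F) : Fin (m * n) → F) i := by
      rw [sum_pow_div_pow_of_isPrimitiveRoot hζ]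
      simp only [Pi.single_apply, eq_iff, ite_and, mul_ite, mul_zero, mul_one]

theorem iSup_range_twist [NeZero m] {ζ : F} (hζ : IsPrimitiveRoot ζ m) (hmn : m.Coprime n) :
    ⨆ k : Fin m, (twist m n (ζ ^ (k : ℕ))).range = ⊤ := by
  have := hζ.neZero'
  rw [eq_top_iff, ← LinearMap.iSup_range_single F (fun _ : Fin (m * n) => F)]
  refine iSup_le fun j => ?_
  rintro _ ⟨c, rfl⟩
  have h : Pi.single j c = (c / m) • (Pi.single j (m : F) : Fin (m * n) → F) := by
    rw [← Pi.single_smul, smul_eq_mul, div_mul_cancel₀ _ (NeZero.ne _)]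
  rw [LinearMap.coe_single, h, ← sum_inv_pow_smul_twist_single hζ hmn]
  exact Submodule.smul_mem _ _ <| Submodule.sum_mem _ fun k _ => Submodule.smul_mem _ _ <|
    Submodule.mem_iSup_of_mem k ⟨_, rfl⟩

end Twist

theorem stmt11_general {F : Type*} [Field F] {m n : ℕ} [NeZero m] [NeZero n] {ζ : F}
    (hζ : IsPrimitiveRoot ζ m) (hmn : m.Coprime n) : hcc F (m * n) ≤ m * hcc F n := by
  refine hcc_le fun U hU => ?_
  have comap_covering (k : Fin m) : IsCyclicallyCovering (U.comap (twist m n (ζ ^ (k : ℕ)))) :=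
    hU.comap (twist_cshift (by rw [pow_right_comm, pow_mul, hζ.pow_eq_one, one_pow, one_pow]))
  calc
    Module.finrank F ((Fin (m * n) → F) ⧸ U)
    _ ≤ ∑ k : Fin m, Module.finrank F ((Fin n → F) ⧸ U.comap (twist m n (ζ ^ (k : ℕ)))) :=
      finrank_quotient_le_sum_finrank_quotient_comap _ (iSup_range_twist hζ hmn) U
    _ ≤ ∑ _k : Fin m, hcc F n :=
      Finset.sum_le_sum fun k _ => (comap_covering k).finrank_quotient_le_hcc
    _ = m * hcc F n := by simp

/-- Let `q` be a power of an odd prime and `n` an odd positive integer.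
If `h_q(n) = 0`, then `h_q(2n) = 0`. -/
theorem stmt11 (F : Type*) [Field F] [Fintype F]
    (hodd : Odd (Fintype.card F))
    (n : ℕ) (hn : 0 < n) (hnodd : Odd n)
    (h0 : hcc F n = 0) :
    hcc F (2 * n) = 0 := by
  have : NeZero n := ⟨hn.ne'⟩
  simpa [h0] using stmt11_general (isPrimitiveRoot_neg_one_of_odd_card hodd) hnodd.coprime_two_left
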